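/- arXiv:1003.1021 — 2 statements merged into one kernel-verified Lean document; each statement's English description precedes it below -/
import Mathlib

section
/- Let p, q ∈ (0,1) and define the Stieltjes transform m_{p,q}(z) = (1 − (p+q)/z + √(1 − (2(p+q) − 4pq)/z + (p−q)²/z²)) / (2(1−z)) for z in the upper half plane, with the square root taken with argument in [0,π). Then for every x ∈ (0,1), lim_{ω→0+} (1/π) Im m_{p,q}(x + iω) = √((1 − r_−/x)(r_+/x − 1)) / (2π(1−x)) if x ∈ (r_−, r_+), and 0 if x ∈ (0,1) \ [r_−, r_+], where r_− = (√(p(1−q)) − √(q(1−p)))² and r_+ = (√(p(1−q)) + √(q(1−p)))². -/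
/-!
The argument rests on two facts about the square root `s = csqrt w`. From `s ^ 2 = w` and
`0 ≤ s.im` one gets `s.im = √((‖w‖ - w.re) / 2)` and `|s.re| = √((‖w‖ + w.re) / 2)`. Hence
`s.im` and `|s.re|` are continuous in `w` on all of `ℂ`, although `s.re` jumps across the positive
real axis.

As `ω → 0+`, the radicand tends to the real number `w₀ = (1 - r₋ / x) (1 - r₊ / x)`, so the
imaginary part of the root tends to `√(-w₀)` (with the convention that `√` vanishes on negative
reals). The denominator `2 (1 - x - iω)` becomes real in the limit, so the possibly discontinuous
real part of the root contributes a bounded quantity times `ω`. Thus the limit of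
`Im m_{p,q}(x + iω)` is `√(-w₀) / (2 (1 - x))` in all cases, and `-w₀ ≤ 0` off `[r₋, r₊]`.
-/

open Filter Topology Complex

noncomputable section

/-- The square root of a complex number whose argument lies in `[0, π)`. -/
def csqrt (z : ℂ) : ℂ :=
  if 0 ≤ (z ^ (2⁻¹ : ℂ)).im then z ^ (2⁻¹ : ℂ) else -(z ^ (2⁻¹ : ℂ))

/-- The limiting Stieltjes transform `m_{p,q}`. -/
def stieltjesPQ (p q : ℝ) (z : ℂ) : ℂ :=
  (1 - ((p : ℂ) + q) / z +
      csqrt (1 - (2 * ((p : ℂ) + q) - 4 * p * q) / z + ((p : ℂ) - q) ^ 2 / z ^ 2)) /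
    (2 * (1 - z))

def rMinus (p q : ℝ) : ℝ := (Real.sqrt (p * (1 - q)) - Real.sqrt (q * (1 - p))) ^ 2
def rPlus (p q : ℝ) : ℝ := (Real.sqrt (p * (1 - q)) + Real.sqrt (q * (1 - p))) ^ 2

lemma csqrt_sq (w : ℂ) : csqrt w ^ 2 = w := by
  have h : (w ^ (2⁻¹ : ℂ)) ^ 2 = w := by
    simp
  unfold csqrt
  split_ifs
  · exact h
  · rw [neg_sq, h]

lemma csqrt_im_nonneg (w : ℂ) : 0 ≤ (csqrt w).im := by
  unfold csqrt
  split_ifs with h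
  · exact h
  · rw [Complex.neg_im]
    linarith

lemma csqrt_re_sq_sub_im_sq (w : ℂ) : (csqrt w).re ^ 2 - (csqrt w).im ^ 2 = w.re := by
  have h := congrArg Complex.re (csqrt_sq w)
  rw [pow_two, Complex.mul_re] at h
  linarith

lemma csqrt_re_sq_add_im_sq (w : ℂ) : (csqrt w).re ^ 2 + (csqrt w).im ^ 2 = ‖w‖ := by
  have h := congrArg norm (csqrt_sq w)
  rw [norm_pow, Complex.sq_norm, Complex.normSq_apply] at h
  linarith

lemma csqrt_im (w : ℂ) : (csqrt w).im = Real.sqrt ((‖w‖ - w.re) / 2) := by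
  rw [← Real.sqrt_sq (csqrt_im_nonneg w)]
  congr 1
  linarith [csqrt_re_sq_sub_im_sq w, csqrt_re_sq_add_im_sq w]

lemma abs_csqrt_re (w : ℂ) : |(csqrt w).re| = Real.sqrt ((‖w‖ + w.re) / 2) := by
  rw [← Real.sqrt_sq_eq_abs]
  congr 1
  linarith [csqrt_re_sq_sub_im_sq w, csqrt_re_sq_add_im_sq w]

/-- At a real radicand `c`, the formula for the imaginary part of the root is `√(-c)`, also for
`c > 0`, where both sides vanish. -/
lemma sqrt_norm_sub_re_ofReal (c : ℝ) :
    Real.sqrt ((‖(c : ℂ)‖ - (c : ℂ).re) / 2) = Real.sqrt (-c) := by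
  rw [Complex.norm_real, Complex.ofReal_re, Real.norm_eq_abs]
  rcases le_total 0 c with h | h
  · rw [abs_of_nonneg h, Real.sqrt_eq_zero_of_nonpos (x := -c) (by linarith)]
    simp
  · rw [abs_of_nonpos h]
    congr 1
    ring

/-- If `A`, `w`, `d` have real limits `a`, `c`, `b ≠ 0`, then the imaginary part of
`(A + csqrt w) / d` converges to `√(-c) / b`. Continuity of `csqrt` itself at `c` is not needed. -/
lemma tendsto_im_add_csqrt_div {l : Filter ℝ} {A w d : ℝ → ℂ} {a b c : ℝ} (hb : b ≠ 0)
    (hA : Tendsto A l (𝓝 (a : ℂ))) (hw : Tendsto w l (𝓝 (c : ℂ)))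
    (hd : Tendsto d l (𝓝 (b : ℂ))) :
    Tendsto (fun t => ((A t + csqrt (w t)) / d t).im) l (𝓝 (Real.sqrt (-c) / b)) := by
  have hre {f : ℝ → ℂ} {z : ℂ} (h : Tendsto f l (𝓝 z)) : Tendsto (fun t => (f t).re) l (𝓝 z.re) :=
    (Complex.continuous_re.tendsto z).comp h
  have him {f : ℝ → ℂ} {z : ℂ} (h : Tendsto f l (𝓝 z)) : Tendsto (fun t => (f t).im) l (𝓝 z.im) :=
    (Complex.continuous_im.tendsto z).comp h
  have hs_im : Tendsto (fun t => (csqrt (w t)).im) l (𝓝 (Real.sqrt (-c))) := by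
    rw [← sqrt_norm_sub_re_ofReal c]
    simp_rw [csqrt_im]
    exact ((hw.norm.sub (hre hw)).div_const 2).sqrt
  have hs_re : Tendsto (fun t => (csqrt (w t)).re * (d t).im) l (𝓝 0) := by
    rw [tendsto_zero_iff_abs_tendsto_zero]
    have h := (((hw.norm.add (hre hw)).div_const 2).sqrt).mul (him hd).abs
    rw [Complex.ofReal_im, abs_zero, mul_zero] at h
    refine h.congr fun t => ?_
    simp [abs_mul, abs_csqrt_re]
  have hn : Tendsto (fun t => Complex.normSq (d t)) l (𝓝 (Complex.normSq (b : ℂ))) :=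
    (Complex.continuous_normSq.tendsto _).comp hd
  have hn0 : Complex.normSq (b : ℂ) ≠ 0 := by simpa using hb
  have h := (((((him hA).add hs_im).mul (hre hd)).sub
    (((hre hA).mul (him hd)).add hs_re)).div hn hn0)
  convert h using 1
  · funext t
    simp only [Complex.div_im, Complex.add_re, Complex.add_im, Pi.div_apply]
    ring
  · congr 1
    simp only [Complex.ofReal_im, Complex.ofReal_re, Complex.normSq_ofReal]
    field_simp
    ring

lemma rMinus_add_rPlus {p q : ℝ} (hp : p ∈ Set.Ioo (0 : ℝ) 1) (hq : q ∈ Set.Ioo (0 : ℝ) 1) :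
    rMinus p q + rPlus p q = 2 * (p + q) - 4 * p * q := by
  have h1 := Real.sq_sqrt (mul_nonneg hp.1.le (sub_nonneg.2 hq.2.le))
  have h2 := Real.sq_sqrt (mul_nonneg hq.1.le (sub_nonneg.2 hp.2.le))
  unfold rMinus rPlus
  linear_combination 2 * h1 + 2 * h2

lemma rMinus_mul_rPlus {p q : ℝ} (hp : p ∈ Set.Ioo (0 : ℝ) 1) (hq : q ∈ Set.Ioo (0 : ℝ) 1) :
    rMinus p q * rPlus p q = (p - q) ^ 2 := by
  have h1 := Real.sq_sqrt (mul_nonneg hp.1.le (sub_nonneg.2 hq.2.le))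
  have h2 := Real.sq_sqrt (mul_nonneg hq.1.le (sub_nonneg.2 hp.2.le))
  have h : rMinus p q * rPlus p q
      = (Real.sqrt (p * (1 - q)) ^ 2 - Real.sqrt (q * (1 - p)) ^ 2) ^ 2 := by
    unfold rMinus rPlus
    ring
  rw [h, h1, h2]
  ring

lemma rMinus_le_rPlus (p q : ℝ) : rMinus p q ≤ rPlus p q := by
  unfold rMinus rPlus
  nlinarith [mul_nonneg (Real.sqrt_nonneg (p * (1 - q))) (Real.sqrt_nonneg (q * (1 - p)))]

/-- The boundary value of `Im m_{p,q} / π` at `x`, inside and outside `[r₋, r₊]` alike: outside,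
the radicand is nonpositive and its real square root is `0`. -/
lemma tendsto_stieltjesPQ_im {p q x : ℝ} (hp : p ∈ Set.Ioo (0 : ℝ) 1)
    (hq : q ∈ Set.Ioo (0 : ℝ) 1) (hx : x ∈ Set.Ioo (0 : ℝ) 1) :
    Tendsto (fun ω : ℝ => (1 / Real.pi) * (stieltjesPQ p q ((x : ℂ) + ω * Complex.I)).im)
      (𝓝[>] 0)
      (𝓝 (Real.sqrt ((1 - rMinus p q / x) * (rPlus p q / x - 1)) /
        (2 * Real.pi * (1 - x)))) := by
  have hx0 : x ≠ 0 := hx.1.ne'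
  have hx1 : 1 - x ≠ 0 := (sub_pos.2 hx.2).ne'
  have hxc : (x : ℂ) ≠ 0 := by exact_mod_cast hx0
  have hz : Tendsto (fun ω : ℝ => (x : ℂ) + ω * Complex.I) (𝓝[>] 0) (𝓝 (x : ℂ)) := by
    have h : Continuous (fun ω : ℝ => (x : ℂ) + ω * Complex.I) := by fun_prop
    simpa using (h.tendsto 0).mono_left nhdsWithin_le_nhds
  have hA : Tendsto (fun ω : ℝ => 1 - ((p : ℂ) + q) / ((x : ℂ) + ω * Complex.I)) (𝓝[>] 0)
      (𝓝 ((1 - (p + q) / x : ℝ) : ℂ)) := by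
    push_cast
    exact (tendsto_const_nhds.div hz hxc).const_sub 1
  have hw : Tendsto (fun ω : ℝ => 1 - (2 * ((p : ℂ) + q) - 4 * p * q) / ((x : ℂ) + ω * Complex.I)
      + ((p : ℂ) - q) ^ 2 / ((x : ℂ) + ω * Complex.I) ^ 2) (𝓝[>] 0)
      (𝓝 ((1 - (2 * (p + q) - 4 * p * q) / x + (p - q) ^ 2 / x ^ 2 : ℝ) : ℂ)) := by
    push_cast
    exact ((tendsto_const_nhds.div hz hxc).const_sub 1).add
      (tendsto_const_nhds.div (hz.pow 2) (pow_ne_zero 2 hxc))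
  have hd : Tendsto (fun ω : ℝ => 2 * (1 - ((x : ℂ) + ω * Complex.I))) (𝓝[>] 0)
      (𝓝 ((2 * (1 - x) : ℝ) : ℂ)) := by
    push_cast
    exact (hz.const_sub 1).const_mul 2
  have h := (tendsto_im_add_csqrt_div (mul_ne_zero two_ne_zero hx1) hA hw hd).const_mul
    (1 / Real.pi)
  have hfac : -(1 - (2 * (p + q) - 4 * p * q) / x + (p - q) ^ 2 / x ^ 2)
      = (1 - rMinus p q / x) * (rPlus p q / x - 1) := by
    rw [← rMinus_add_rPlus hp hq, ← rMinus_mul_rPlus hp hq]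
    field_simp
    ring
  rw [hfac] at h
  have hval : Real.sqrt ((1 - rMinus p q / x) * (rPlus p q / x - 1)) / (2 * Real.pi * (1 - x))
      = 1 / Real.pi *
        (Real.sqrt ((1 - rMinus p q / x) * (rPlus p q / x - 1)) / (2 * (1 - x))) := by
    rw [div_mul_div_comm, one_mul, mul_comm 2 Real.pi, mul_assoc]
  rw [hval]
  exact h

theorem stmt16 (p q : ℝ) (hp : p ∈ Set.Ioo (0 : ℝ) 1) (hq : q ∈ Set.Ioo (0 : ℝ) 1) :
    ∀ x ∈ Set.Ioo (0 : ℝ) 1,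
      (x ∈ Set.Ioo (rMinus p q) (rPlus p q) →
        Tendsto (fun ω : ℝ => (1 / Real.pi) * (stieltjesPQ p q ((x : ℂ) + ω * Complex.I)).im)
          (𝓝[>] 0)
          (𝓝 (Real.sqrt ((1 - rMinus p q / x) * (rPlus p q / x - 1)) /
            (2 * Real.pi * (1 - x))))) ∧
      (x ∉ Set.Icc (rMinus p q) (rPlus p q) →
        Tendsto (fun ω : ℝ => (1 / Real.pi) * (stieltjesPQ p q ((x : ℂ) + ω * Complex.I)).im)
          (𝓝[>] 0) (𝓝 0)) := by
  intro x hx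
  have h := tendsto_stieltjesPQ_im hp hq hx
  refine ⟨fun _ => h, fun hout => ?_⟩
  have hle := rMinus_le_rPlus p q
  have hneg : (1 - rMinus p q / x) * (rPlus p q / x - 1) ≤ 0 := by
    rcases lt_or_ge x (rMinus p q) with hlt | hge
    · refine mul_nonpos_of_nonpos_of_nonneg ?_ ?_
      · rw [sub_nonpos, one_le_div hx.1]
        exact hlt.le
      · rw [sub_nonneg, one_le_div hx.1]
        exact hlt.le.trans hle
    · have hgt : rPlus p q < x := not_le.1 fun hxr => hout ⟨hge, hxr⟩
      refine mul_nonpos_of_nonneg_of_nonpos ?_ ?_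
      · rw [sub_nonneg, div_le_one hx.1]
        exact hge
      · rw [sub_nonpos, div_le_one hx.1]
        exact hgt.le
  rwa [Real.sqrt_eq_zero_of_nonpos hneg, zero_div] at h

end
end

section
/- Let p, q ∈ (0,1) and set r_− = (√(p(1−q)) − √(q(1−p)))² and r_+ = (√(p(1−q)) + √(q(1−p)))². Then ∫_{r_−}^{r_+} √((1 − r_−/x)(r_+/x − 1)) / (2π(1−x)) dx = 1 − max(p,q) if p + q > 1, and ∫_{r_−}^{r_+} √((1 − r_−/x)(r_+/x − 1)) / (2π(1−x)) dx = min(p,q) if p + q ≤ 1. -/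
/-!
Write `a = r₋`, `b = r₊`. On `(a, b)` the integrand equals
`(2π)⁻¹ √((x-a)(b-x)) (1/x + 1/(1-x))`, by partial fractions. The integral of
`√((x-a)(b-x)) / x` over `[a, b]` is `π ((a+b)/2 - √(ab))` whenever `0 ≤ a < b`
(`integral_sqrt_div`, by an explicit antiderivative), and the reflection `x ↦ 1 - x` turns the
second summand into the same integral with endpoints `1-b, 1-a`. Hence the integral is
`(1 - √(ab) - √((1-a)(1-b))) / 2`, and the theorem follows from `ab = (p-q)²` and
`(1-a)(1-b) = (1-p-q)²`.
-/

noncomputable section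

/-- An antiderivative of `√((x-a)(b-x)) / x` on `(a, b)`. For `a = 0` the last term vanishes
identically, so the function is continuous on `[a, b]` in that case too. -/
def sqrtDivPrimitive (a b x : ℝ) : ℝ :=
  √((x - a) * (b - x)) + (a + b) / 2 * Real.arcsin ((2 * x - a - b) / (b - a))
    - √(a * b) * Real.arcsin (((a + b) * x - 2 * (a * b)) / (x * (b - a)))

lemma hasDerivAt_arcsin_term {u : ℝ → ℝ} {u' x w : ℝ} (hu : HasDerivAt u u' x) (hw : 0 < w)
    (h : 1 - u x ^ 2 = w ^ 2) : HasDerivAt (fun y => Real.arcsin (u y)) (u' / w) x := by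
  have h1 : u x ≠ -1 := by
    intro h1; rw [h1] at h; nlinarith
  have h2 : u x ≠ 1 := by
    intro h1; rw [h1] at h; nlinarith
  have := (Real.hasDerivAt_arcsin h1 h2).comp x hu
  rw [h, Real.sqrt_sq hw.le] at this
  exact this.congr_deriv (by ring)

lemma hasDerivAt_sqrtDivPrimitive {a b x : ℝ} (ha : 0 ≤ a) (hx : x ∈ Set.Ioo a b) :
    HasDerivAt (sqrtDivPrimitive a b) (√((x - a) * (b - x)) / x) x := by
  obtain ⟨hax, hxb⟩ := hx
  have hx0 : 0 < x := ha.trans_lt hax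
  have hba : 0 < b - a := by linarith
  have hprod : 0 < (x - a) * (b - x) := mul_pos (by linarith) (by linarith)
  obtain ⟨s, hs⟩ : ∃ s, s = √((x - a) * (b - x)) := ⟨_, rfl⟩
  have hs0 : 0 < s := hs ▸ Real.sqrt_pos.2 hprod
  have hs2 : s ^ 2 = (x - a) * (b - x) := by rw [hs, Real.sq_sqrt hprod.le]
  have h1 : HasDerivAt (fun y : ℝ => √((y - a) * (b - y))) ((a + b - 2 * x) / (2 * s)) x := by
    have h := (((hasDerivAt_id x).sub_const a).mul ((hasDerivAt_id x).const_sub b)).sqrt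
      hprod.ne'
    refine h.congr_deriv ?_
    rw [hs]
    simp only [id, Pi.mul_apply]
    congr 1
    ring
  have h2 : HasDerivAt (fun y : ℝ => Real.arcsin ((2 * y - a - b) / (b - a))) (1 / s) x := by
    have hu : HasDerivAt (fun y : ℝ => (2 * y - a - b) / (b - a)) (2 / (b - a)) x := by
      have h := ((((hasDerivAt_id x).const_mul 2).sub_const a).sub_const b).div_const (b - a)
      simpa using h
    have h := hasDerivAt_arcsin_term hu (w := 2 * s / (b - a)) (by positivity) (by
      rw [div_pow, div_pow, mul_pow, hs2]; field_simp; ring)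
    refine h.congr_deriv ?_
    field_simp
  have h3 : HasDerivAt (fun y : ℝ => √(a * b) *
      Real.arcsin (((a + b) * y - 2 * (a * b)) / (y * (b - a)))) (a * b / (x * s)) x := by
    rcases ha.eq_or_lt with rfl | ha
    · simpa using hasDerivAt_const x (0 : ℝ)
    have hab : 0 < a * b := mul_pos ha (by linarith)
    obtain ⟨c, hc⟩ : ∃ c, c = √(a * b) := ⟨_, rfl⟩
    have hc0 : 0 < c := hc ▸ Real.sqrt_pos.2 hab
    have hc2 : c ^ 2 = a * b := by rw [hc, Real.sq_sqrt hab.le]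
    have hu : HasDerivAt (fun y : ℝ => ((a + b) * y - 2 * (a * b)) / (y * (b - a)))
        (2 * c ^ 2 / (x ^ 2 * (b - a))) x := by
      have h := (((hasDerivAt_id x).const_mul (a + b)).sub_const (2 * (a * b))).div
        ((hasDerivAt_id x).mul_const (b - a)) (by simp only [id]; positivity)
      refine h.congr_deriv ?_
      rw [hc2]
      simp only [id]
      field_simp
      ring
    have h := hasDerivAt_arcsin_term hu (w := 2 * c * s / (x * (b - a))) (by positivity) (by
      rw [div_pow, div_pow, mul_pow, mul_pow, mul_pow, hs2, hc2]; field_simp; ring)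
    rw [← hc]
    refine (h.const_mul c).congr_deriv ?_
    rw [← hc2]
    field_simp
  refine ((h1.add (h2.const_mul ((a + b) / 2))).sub h3).congr_deriv ?_
  rw [← hs]
  field_simp
  rw [hs2]
  ring

lemma continuousOn_sqrtDivPrimitive {a b : ℝ} (ha : 0 ≤ a) (hab : a < b) :
    ContinuousOn (sqrtDivPrimitive a b) (Set.Icc a b) := by
  unfold sqrtDivPrimitive
  refine ContinuousOn.sub (by fun_prop) ?_
  rcases ha.eq_or_lt with rfl | ha
  · simpa using continuousOn_const
  refine continuousOn_const.mul (Real.continuous_arcsin.comp_continuousOn ?_)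
  refine ContinuousOn.div (by fun_prop) (by fun_prop) fun x hx => ?_
  exact mul_ne_zero (ha.trans_le hx.1).ne' (by linarith)

lemma intervalIntegrable_sqrt_div {a b : ℝ} (ha : 0 ≤ a) (hab : a < b) :
    IntervalIntegrable (fun x => √((x - a) * (b - x)) / x) MeasureTheory.volume a b := by
  apply intervalIntegral.intervalIntegrable_deriv_of_nonneg (g := sqrtDivPrimitive a b)
  · rw [Set.uIcc_of_le hab.le]
    exact continuousOn_sqrtDivPrimitive ha hab
  · rw [min_eq_left hab.le, max_eq_right hab.le]
    exact fun x hx => hasDerivAt_sqrtDivPrimitive ha hx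
  · rw [min_eq_left hab.le, max_eq_right hab.le]
    exact fun x hx => div_nonneg (Real.sqrt_nonneg _) (ha.trans hx.1.le)

lemma integral_sqrt_div {a b : ℝ} (ha : 0 ≤ a) (hab : a < b) :
    ∫ x in a..b, √((x - a) * (b - x)) / x = Real.pi * ((a + b) / 2 - √(a * b)) := by
  rw [intervalIntegral.integral_eq_sub_of_hasDerivAt_of_le hab.le
    (continuousOn_sqrtDivPrimitive ha hab) (fun x hx => hasDerivAt_sqrtDivPrimitive ha hx)
    (intervalIntegrable_sqrt_div ha hab)]
  have hba : b - a ≠ 0 := by linarith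
  have hb : b ≠ 0 := by linarith
  have e1 : (2 * b - a - b) / (b - a) = 1 := by rw [div_eq_one_iff_eq hba]; ring
  have e2 : (2 * a - a - b) / (b - a) = -1 := by rw [div_eq_iff hba]; ring
  have e3 : ((a + b) * b - 2 * (a * b)) / (b * (b - a)) = 1 := by
    rw [div_eq_one_iff_eq (mul_ne_zero hb hba)]; ring
  have e4 : √(a * b) * Real.arcsin (((a + b) * a - 2 * (a * b)) / (a * (b - a)))
      = √(a * b) * -(Real.pi / 2) := by
    rcases ha.eq_or_lt with rfl | ha
    · simp
    rw [← Real.arcsin_neg_one]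
    congr 2
    rw [div_eq_iff (mul_ne_zero ha.ne' hba)]; ring
  unfold sqrtDivPrimitive
  rw [e1, e2, e3, e4, Real.arcsin_one, Real.arcsin_neg_one]
  simp only [sub_self, mul_zero, zero_mul, Real.sqrt_zero]
  ring

lemma integral_eq_of_endpoints {a b : ℝ} (ha : 0 ≤ a) (hab : a < b) (hb : b ≤ 1) :
    ∫ x in a..b, √((1 - a / x) * (b / x - 1)) / (2 * Real.pi * (1 - x))
      = (1 - √(a * b) - √((1 - a) * (1 - b))) / 2 := by
  have hb' : 0 ≤ 1 - b := by linarith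
  have hab' : 1 - b < 1 - a := by linarith
  have hrefl : ∀ x, √((1 - x - (1 - b)) * (1 - a - (1 - x))) / (1 - x)
      = √((x - a) * (b - x)) / (1 - x) := fun x => by
    congr 2; ring
  have i1 := intervalIntegrable_sqrt_div ha hab
  have i2 : IntervalIntegrable (fun x => √((x - a) * (b - x)) / (1 - x))
      MeasureTheory.volume a b := by
    have h := (intervalIntegrable_sqrt_div hb' hab').comp_sub_left 1
    simp only [hrefl, sub_sub_cancel] at h
    exact h.symm
  have v2 : ∫ x in a..b, √((x - a) * (b - x)) / (1 - x)
      = Real.pi * ((1 - b + (1 - a)) / 2 - √((1 - b) * (1 - a))) := by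
    rw [← integral_sqrt_div hb' hab', ← intervalIntegral.integral_comp_sub_left]
    simp only [hrefl]
  have key : ∫ x in a..b, √((1 - a / x) * (b / x - 1)) / (2 * Real.pi * (1 - x))
      = ∫ x in a..b, (2 * Real.pi)⁻¹ *
        (√((x - a) * (b - x)) / x + √((x - a) * (b - x)) / (1 - x)) := by
    rw [intervalIntegral.integral_of_le hab.le, intervalIntegral.integral_of_le hab.le,
      MeasureTheory.integral_Ioc_eq_integral_Ioo, MeasureTheory.integral_Ioc_eq_integral_Ioo]
    refine MeasureTheory.setIntegral_congr_fun measurableSet_Ioo fun x hx => ?_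
    have hx0 : 0 < x := ha.trans_lt hx.1
    have hx1 : 1 - x ≠ 0 := by linarith [hx.2]
    have e : (1 - a / x) * (b / x - 1) = ((x - a) * (b - x)) / x ^ 2 := by
      field_simp
    have hpi := Real.pi_ne_zero
    rw [e, Real.sqrt_div' _ (sq_nonneg x), Real.sqrt_sq hx0.le]
    field_simp
    ring
  rw [key, intervalIntegral.integral_const_mul, intervalIntegral.integral_add i1 i2,
    integral_sqrt_div ha hab, v2, mul_comm (1 - b)]
  have hpi := Real.pi_ne_zero
  field_simp
  ring

lemma integral_rMinus_rPlus {p q : ℝ} (hp : p ∈ Set.Ioo (0 : ℝ) 1)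
    (hq : q ∈ Set.Ioo (0 : ℝ) 1) :
    ∫ x in rMinus p q..rPlus p q,
      √((1 - rMinus p q / x) * (rPlus p q / x - 1)) / (2 * Real.pi * (1 - x))
      = (1 - |p - q| - |1 - p - q|) / 2 := by
  obtain ⟨hp0, hp1⟩ := hp
  obtain ⟨hq0, hq1⟩ := hq
  have hA : 0 < p * (1 - q) := mul_pos hp0 (by linarith)
  have hB : 0 < q * (1 - p) := mul_pos hq0 (by linarith)
  have hα := Real.sqrt_pos.2 hA
  have hβ := Real.sqrt_pos.2 hB
  have hα2 := Real.sq_sqrt hA.le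
  have hβ2 := Real.sq_sqrt hB.le
  have ha : 0 ≤ rMinus p q := sq_nonneg _
  have hab : rMinus p q < rPlus p q := by
    unfold rMinus rPlus
    nlinarith [mul_pos hα hβ]
  have hsum : rMinus p q + rPlus p q = 2 * (p * (1 - q) + q * (1 - p)) := by
    unfold rMinus rPlus
    linear_combination 2 * hα2 + 2 * hβ2
  have hmul : rMinus p q * rPlus p q = (p - q) ^ 2 := by
    have : rMinus p q * rPlus p q = (√(p * (1 - q)) ^ 2 - √(q * (1 - p)) ^ 2) ^ 2 := by
      unfold rMinus rPlus; ring
    rw [this, hα2, hβ2]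
    ring
  have hmul' : (1 - rMinus p q) * (1 - rPlus p q) = (1 - p - q) ^ 2 := by
    linear_combination hmul - hsum
  have hb : rPlus p q ≤ 1 := by
    -- The factors `1 - r₋ > 1 - r₊` have nonnegative product and positive sum.
    by_contra! h
    have h1 : 0 < p * q := mul_pos hp0 hq0
    have h2 : 0 < (1 - p) * (1 - q) := mul_pos (by linarith) (by linarith)
    have h3 : 0 < 1 - rMinus p q := by nlinarith
    nlinarith [sq_nonneg (1 - p - q), mul_pos h3 (sub_pos.2 h)]
  rw [integral_eq_of_endpoints ha hab hb, hmul, hmul', Real.sqrt_sq_eq_abs,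
    Real.sqrt_sq_eq_abs]

theorem stmt17 (p q : ℝ) (hp : p ∈ Set.Ioo (0 : ℝ) 1) (hq : q ∈ Set.Ioo (0 : ℝ) 1) :
    (1 < p + q →
      (∫ x in rMinus p q..rPlus p q,
        Real.sqrt ((1 - rMinus p q / x) * (rPlus p q / x - 1)) / (2 * Real.pi * (1 - x)))
        = 1 - max p q) ∧
    (p + q ≤ 1 →
      (∫ x in rMinus p q..rPlus p q,
        Real.sqrt ((1 - rMinus p q / x) * (rPlus p q / x - 1)) / (2 * Real.pi * (1 - x)))
        = min p q) := by
  rw [integral_rMinus_rPlus hp hq]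
  constructor
  · intro h
    rw [abs_of_neg (by linarith : 1 - p - q < 0)]
    rcases le_total p q with hpq | hpq
    · rw [max_eq_right hpq, abs_of_nonpos (by linarith)]; ring
    · rw [max_eq_left hpq, abs_of_nonneg (by linarith)]; ring
  · intro h
    rw [abs_of_nonneg (by linarith : 0 ≤ 1 - p - q)]
    rcases le_total p q with hpq | hpq
    · rw [min_eq_left hpq, abs_of_nonpos (by linarith)]; ring
    · rw [min_eq_right hpq, abs_of_nonneg (by linarith)]; ring

end
end
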